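/- arXiv:1802.02074 — 2 statements merged into one kernel-verified Lean document; each statement's English description precedes it below -/
import Mathlib

section
/- Let a be an additive and positive parametric sequence, J ≥ 2, θ ∈ (0,∞)^J, p a pmf on ℕ, and let P be the convolution splitting distribution P(y) = p(|y|)·∏_{j=1}^{J} a_{θ_j}(y_j)/a_{|θ|}(|y|) on ℕ^J. Let I be a nonempty proper subset of {1,…,J}. Then the marginal distribution of the subvector indexed by I is itself a convolution splitting distribution: for every z : I → ℕ, ∑_{y ∈ ℕ^J : y_j = z_j for all j∈I} P(y) = (∏_{j∈I} a_{θ_j}(z_j)/a_{|θ_I|}(|z|))·q(|z|), where |z| = ∑_{j∈I} z_j, |θ_I| = ∑_{j∈I} θ_j, |θ_{−I}| = ∑_{j∉I} θ_j, and q(n) = ∑_{k ≥ n} (a_{|θ_I|}(n)·a_{|θ_{−I}|}(k−n)/a_{|θ|}(k))·p(k). -/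
/-!
Additivity says that the generating functions `A_θ = ∑ₙ a_θ(n) Xⁿ` satisfy `A_θ A_θ' = A_{θ+θ'}`.
Hence `∏ⱼ A_{θⱼ} = A_{|θ|}`, so the weights `∏ⱼ a_{θⱼ}(wⱼ)` of the vectors `w` of total `m` add up
to `a_{|θ|}(m)`. Once the coordinates in `I` are fixed to `z`, the splitting weight depends on the
remaining coordinates `w` only through the factor `∏ⱼ a_{θⱼ}(wⱼ)` and the total `|w|`, so grouping
by `m = |w|` leaves a single series in `m`, which is the one defining `q(|z|)` with `k = |z| + m`.
-/

open Finset

section ParametricSequence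

variable {M R : Type*} [AddCommMonoid M] [PartialOrder M]

/-- An additive parametric sequence: a convolution semigroup indexed by the positive elements
of `M`. The values `a θ` at other `θ` are unconstrained. -/
def IsAdditiveSequence [NonUnitalNonAssocSemiring R] (a : M → ℕ → R) : Prop :=
  ∀ θ θ' : M, 0 < θ → 0 < θ' → ∀ n : ℕ,
    ∑ y ∈ range (n + 1), a θ y * a θ' (n - y) = a (θ + θ') n

/-- A positive parametric sequence, with positivity required at positive parameters only. -/
def IsPositiveSequence [Zero R] [LT R] (a : M → ℕ → R) : Prop :=
  ∀ θ : M, 0 < θ → ∀ y : ℕ, 0 < a θ y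

namespace IsAdditiveSequence

theorem powerSeries_mk_mul_mk [Semiring R] {a : M → ℕ → R} (ha : IsAdditiveSequence a) {θ θ' : M}
    (hθ : 0 < θ) (hθ' : 0 < θ') :
    PowerSeries.mk (a θ) * PowerSeries.mk (a θ') = PowerSeries.mk (a (θ + θ')) := by
  ext n
  simp only [PowerSeries.coeff_mul, PowerSeries.coeff_mk, ← ha θ θ' hθ hθ' n,
    Nat.sum_antidiagonal_eq_sum_range_succ_mk]

theorem mul_le [Semiring R] [PartialOrder R] [IsOrderedRing R] {a : M → ℕ → R}
    (ha : IsAdditiveSequence a) (hpos : IsPositiveSequence a) {θ θ' : M}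
    (hθ : 0 < θ) (hθ' : 0 < θ') (n m : ℕ) :
    a θ n * a θ' m ≤ a (θ + θ') (n + m) := by
  rw [← ha θ θ' hθ hθ']
  simpa only [Nat.add_sub_cancel_left] using
    single_le_sum (f := fun y ↦ a θ y * a θ' (n + m - y))
      (fun y _ ↦ mul_nonneg (hpos θ hθ y).le (hpos θ' hθ' _).le)
      (mem_range.2 (by lia : n < n + m + 1))

variable [IsOrderedCancelAddMonoid M] [CommSemiring R] {a : M → ℕ → R} {ι : Type*} {θ : ι → M}

theorem prod_powerSeries_mk (ha : IsAdditiveSequence a) (hθ : ∀ j, 0 < θ j) {s : Finset ι}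
    (hs : s.Nonempty) :
    ∏ j ∈ s, PowerSeries.mk (a (θ j)) = PowerSeries.mk (a (∑ j ∈ s, θ j)) := by
  induction hs using Nonempty.cons_induction with
  | singleton i => simp only [prod_singleton, sum_singleton]
  | cons i s hi hs ih =>
    rw [prod_cons, sum_cons, ih,
      ha.powerSeries_mk_mul_mk (hθ i) (sum_pos (fun j _ ↦ hθ j) hs)]

theorem sum_piAntidiag_prod [Fintype ι] [DecidableEq ι] [Nonempty ι] (ha : IsAdditiveSequence a)
    (hθ : ∀ j, 0 < θ j) (n : ℕ) :
    ∑ w ∈ piAntidiag univ n, ∏ j, a (θ j) (w j) = a (∑ j, θ j) n := by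
  have hcoeff := congrArg (PowerSeries.coeff n) (ha.prod_powerSeries_mk hθ univ_nonempty)
  simp only [PowerSeries.coeff_prod, PowerSeries.coeff_mk] at hcoeff
  rw [← hcoeff]
  exact (sum_equiv Finsupp.equivFunOnFinite (by simp) fun _ _ ↦ rfl).symm

theorem hasSum_prod_of_sum_eq [TopologicalSpace R] [Fintype ι] [Nonempty ι]
    (ha : IsAdditiveSequence a) (hθ : ∀ j, 0 < θ j) (m : ℕ) :
    HasSum (fun w : {w : ι → ℕ // ∑ j, w j = m} ↦ ∏ j, a (θ j) (w.1 j)) (a (∑ j, θ j) m) := by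
  classical
  have hmem (w : ι → ℕ) : w ∈ piAntidiag univ m ↔ ∑ j, w j = m := by simp
  rw [← ha.sum_piAntidiag_prod hθ, ← (Equiv.subtypeEquivRight hmem).hasSum_iff]
  exact (piAntidiag univ m).hasSum fun w ↦ ∏ j, a (θ j) (w j)

end IsAdditiveSequence

end ParametricSequence

theorem hasSum_sigma_of_nonneg_mul {α : Type*} {β : α → Type*} {f g : α → ℝ}
    {u : (Σ i, β i) → ℝ} {S : ℝ} (hu : ∀ x, 0 ≤ u x)
    (hug : ∀ i, HasSum (fun b ↦ u ⟨i, b⟩) (g i)) (hS : HasSum (fun i ↦ f i * g i) S) :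
    HasSum (fun x : Σ i, β i ↦ f x.1 * u x) S := by
  have hnorm (i : α) : HasSum (fun b ↦ ‖f i * u ⟨i, b⟩‖) ‖f i * g i‖ := by
    simpa only [norm_mul, Real.norm_of_nonneg (hu _),
      Real.norm_of_nonneg ((hug i).nonneg fun _ ↦ hu _)] using (hug i).mul_left ‖f i‖
  have hsummable : Summable fun x : Σ i, β i ↦ ‖f x.1 * u x‖ :=
    (summable_sigma_of_nonneg fun _ ↦ norm_nonneg _).2
      ⟨fun i ↦ (hnorm i).summable, by simpa only [(hnorm _).tsum_eq] using hS.summable.norm⟩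
  exact hS.sigma_of_hasSum (fun i ↦ (hug i).mul_left (f i)) hsummable.of_norm

theorem tsum_subtype_le {α : Type*} [AddCommMonoid α] [TopologicalSpace α] (f : ℕ → α) (n : ℕ) :
    ∑' k : {k : ℕ // n ≤ k}, f k = ∑' m, f (n + m) := by
  simp only [add_comm n]
  exact (((notMemRangeEquiv n).symm.trans (Equiv.subtypeEquivRight (by simp))).tsum_eq _).symm

section AgreeingOn

variable {ι β : Type*} [DecidableEq ι]

/-- The vectors that agree with `z` on `I` correspond to their restrictions to the complement
of `I`. -/
def agreeingOnEquiv (I : Finset ι) (z : ι → β) :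
    ({j // j ∉ I} → β) ≃ {y : ι → β // ∀ j ∈ I, y j = z j} :=
  (Equiv.subtypePreimage (· ∈ I) fun j ↦ z j).symm.trans
    (Equiv.subtypeEquivRight fun y ↦ by simp [funext_iff])

@[to_additive]
theorem prod_agreeingOnEquiv [Fintype ι] {N : Type*} [CommMonoid N] (I : Finset ι) (z : ι → β)
    (w : {j // j ∉ I} → β) (f : ι → β → N) :
    ∏ j, f j ((agreeingOnEquiv I z w).1 j) =
      (∏ j ∈ I, f j (z j)) * ∏ j : {j // j ∉ I}, f j (w j) := by
  rw [← prod_mul_prod_compl I]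
  congr 1
  · exact prod_congr rfl fun j hj ↦ by rw [(agreeingOnEquiv I z w).2 j hj]
  · rw [prod_subtype (p := (· ∉ I)) Iᶜ fun _ ↦ mem_compl]
    exact Fintype.prod_congr _ _ fun j ↦ by simp [agreeingOnEquiv, j.2]

end AgreeingOn

section ConvolutionSplitting

variable {M ι : Type*} [AddCommMonoid M]

/-- The convolution splitting distribution of the subvector indexed by `s`, as a function of the
full vector `y` that only reads its coordinates in `s`. -/
noncomputable def convolutionSplitting (a : M → ℕ → ℝ) (θ : ι → M) (p : ℕ → ℝ) (s : Finset ι)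
    (y : ι → ℕ) : ℝ :=
  p (∑ j ∈ s, y j) * (∏ j ∈ s, a (θ j) (y j)) / a (∑ j ∈ s, θ j) (∑ j ∈ s, y j)

theorem convolutionSplitting_agreeingOnEquiv [Fintype ι] [DecidableEq ι] (a : M → ℕ → ℝ)
    (θ : ι → M) (p : ℕ → ℝ) (I : Finset ι) (z : ι → ℕ) (w : {j // j ∉ I} → ℕ) :
    convolutionSplitting a θ p univ (agreeingOnEquiv I z w).1 =
      p (∑ j ∈ I, z j + ∑ j, w j) * (∏ j ∈ I, a (θ j) (z j)) /
        a (∑ j, θ j) (∑ j ∈ I, z j + ∑ j, w j) * ∏ j : {j // j ∉ I}, a (θ j) (w j) := by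
  have hsum := sum_agreeingOnEquiv I z w fun _ n ↦ n
  have hprod := prod_agreeingOnEquiv I z w fun j ↦ a (θ j)
  rw [convolutionSplitting, hsum, hprod]
  ring

/-- The distribution `q` of the part that receives parameter `σ` when a total distributed as `p`
is split in two parts with parameters `σ` and `τ`. -/
noncomputable def convolutionDamage (a : M → ℕ → ℝ) (σ τ : M) (p : ℕ → ℝ) (n : ℕ) : ℝ :=
  ∑' k : {k : ℕ // n ≤ k}, a σ n * a τ (k.val - n) / a (σ + τ) k.val * p k.val

variable [PartialOrder M] {a : M → ℕ → ℝ} {p : ℕ → ℝ}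

theorem hasSum_convolutionDamage (hpos : IsPositiveSequence a) (hadd : IsAdditiveSequence a)
    {σ τ : M} (hσ : 0 < σ) (hτ : 0 < τ) (hp : Summable p) (n : ℕ) :
    HasSum (fun m ↦ a σ n * a τ m / a (σ + τ) (n + m) * p (n + m))
      (convolutionDamage a σ τ p n) := by
  have hratio (m : ℕ) : ‖a σ n * a τ m / a (σ + τ) (n + m)‖ ≤ 1 := by
    have hnum : 0 < a σ n * a τ m := mul_pos (hpos σ hσ n) (hpos τ hτ m)
    have hle := hadd.mul_le hpos hσ hτ n m
    rw [Real.norm_of_nonneg (div_nonneg hnum.le (hnum.le.trans hle))]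
    exact div_le_one_of_le₀ hle (hnum.le.trans hle)
  have hsummable : Summable fun m ↦ a σ n * a τ m / a (σ + τ) (n + m) * p (n + m) := by
    refine .of_norm_bounded (hp.comp_injective (add_right_injective n)).norm fun m ↦ ?_
    exact (norm_mul_le _ _).trans (mul_le_of_le_one_left (norm_nonneg _) (hratio m))
  rw [convolutionDamage, tsum_subtype_le fun k ↦ a σ n * a τ (k - n) / a (σ + τ) k * p k]
  simpa only [Nat.add_sub_cancel_left] using hsummable.hasSum

theorem hasSum_mul_div_convolutionDamage (hpos : IsPositiveSequence a)
    (hadd : IsAdditiveSequence a) {σ τ : M} (hσ : 0 < σ) (hτ : 0 < τ) (hp : Summable p) (n : ℕ)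
    (c : ℝ) :
    HasSum (fun m ↦ p (n + m) * c / a (σ + τ) (n + m) * a τ m)
      (convolutionDamage a σ τ p n * c / a σ n) := by
  have haσ : a σ n ≠ 0 := (hpos σ hσ n).ne'
  have hterm (m : ℕ) : p (n + m) * c / a (σ + τ) (n + m) * a τ m =
      a σ n * a τ m / a (σ + τ) (n + m) * p (n + m) * (c / a σ n) := by
    field_simp
  simp only [hterm]
  rw [mul_div_assoc]
  exact (hasSum_convolutionDamage hpos hadd hσ hτ hp n).mul_right (c / a σ n)

variable [IsOrderedCancelAddMonoid M] {θ : ι → M}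

theorem hasSum_mul_prod_of_hasSum_mul [Fintype ι] [Nonempty ι] (hpos : IsPositiveSequence a)
    (hadd : IsAdditiveSequence a) (hθ : ∀ j, 0 < θ j) {f : ℕ → ℝ} {S : ℝ}
    (hS : HasSum (fun m ↦ f m * a (∑ j, θ j) m) S) :
    HasSum (fun w : ι → ℕ ↦ f (∑ j, w j) * ∏ j, a (θ j) (w j)) S := by
  rw [← (Equiv.sigmaFiberEquiv fun w : ι → ℕ ↦ ∑ j, w j).hasSum_iff]
  convert hasSum_sigma_of_nonneg_mul (f := f)
    (u := fun x : Σ m, {w : ι → ℕ // ∑ j, w j = m} ↦ ∏ j, a (θ j) (x.2.1 j))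
    (fun x ↦ prod_nonneg fun j _ ↦ (hpos _ (hθ j) _).le) (hadd.hasSum_prod_of_sum_eq hθ) hS
    using 2 with x
  simp [Equiv.sigmaFiberEquiv, x.2.2]

theorem marginal_subvector_of_convolution_splitting_general [Fintype ι] [DecidableEq ι]
    (hpos : IsPositiveSequence a) (hadd : IsAdditiveSequence a) (hθ : ∀ j, 0 < θ j)
    (hp : Summable p) {I : Finset ι} (hI : I.Nonempty) (hI' : I ≠ univ) (z : ι → ℕ) :
    HasSum (fun y : {y : ι → ℕ // ∀ j ∈ I, y j = z j} ↦ convolutionSplitting a θ p univ y.1)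
      (convolutionSplitting a θ (convolutionDamage a (∑ j ∈ I, θ j) (∑ j ∈ Iᶜ, θ j) p) I z) := by
  have hσ : 0 < ∑ j ∈ I, θ j := sum_pos (fun j _ ↦ hθ j) hI
  have : Nonempty {j // j ∉ I} := by simpa [eq_univ_iff_forall] using hI'
  have hcompl : ∑ j : {j // j ∉ I}, θ j = ∑ j ∈ Iᶜ, θ j :=
    (sum_subtype Iᶜ (fun _ ↦ mem_compl) θ).symm
  have hτ : 0 < ∑ j ∈ Iᶜ, θ j := hcompl ▸ sum_pos (fun j _ ↦ hθ j) univ_nonempty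
  have hseries : HasSum (fun m ↦ p (∑ j ∈ I, z j + m) * (∏ j ∈ I, a (θ j) (z j)) /
      a (∑ j, θ j) (∑ j ∈ I, z j + m) * a (∑ j : {j // j ∉ I}, θ j) m)
      (convolutionSplitting a θ (convolutionDamage a (∑ j ∈ I, θ j) (∑ j ∈ Iᶜ, θ j) p) I z) := by
    rw [convolutionSplitting, hcompl, ← sum_add_sum_compl I θ]
    exact hasSum_mul_div_convolutionDamage hpos hadd hσ hτ hp _ _
  rw [← (agreeingOnEquiv I z).hasSum_iff]
  simpa only [Function.comp_def, convolutionSplitting_agreeingOnEquiv] using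
    hasSum_mul_prod_of_hasSum_mul hpos hadd (fun j : {j // j ∉ I} ↦ hθ j) hseries

end ConvolutionSplitting

/-- the marginal distribution of a subvector of a convolution splitting
distribution is itself a convolution splitting distribution: for every `z : I → ℕ`,
`P(Y_I = z) = (∏_{j∈I} a (θ j) (z j) / a |θ_I| |z|) * q |z|`, where
`q n = ∑_{k ≥ n} (a |θ_I| n * a |θ_{-I}| (k-n) / a |θ| k) * p k`. -/
theorem marginal_subvector_of_convolution_splitting
    (a : ℝ → ℕ → ℝ)
    (ha_pos : ∀ θ : ℝ, 0 < θ → ∀ y : ℕ, 0 < a θ y)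
    (ha_add : ∀ θ θ' : ℝ, 0 < θ → 0 < θ' → ∀ n : ℕ,
      ∑ y ∈ Finset.range (n + 1), a θ y * a θ' (n - y) = a (θ + θ') n)
    (J : ℕ) (hJ : 2 ≤ J) (θ : Fin J → ℝ) (hθ : ∀ j, 0 < θ j)
    (p : ℕ → ℝ) (hp0 : ∀ n, 0 ≤ p n) (hp1 : ∑' n : ℕ, p n = 1)
    (P : (Fin J → ℕ) → ℝ)
    (hP : ∀ y : Fin J → ℕ,
      P y = p (∑ j, y j) * (∏ j, a (θ j) (y j)) / a (∑ j, θ j) (∑ j, y j))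
    (I : Finset (Fin J)) (hI : I.Nonempty) (hI' : I ≠ Finset.univ)
    (q : ℕ → ℝ)
    (hq : ∀ n : ℕ, q n = ∑' k : {k : ℕ // n ≤ k},
      a (∑ j ∈ I, θ j) n * a (∑ j ∈ Iᶜ, θ j) (k.val - n) / a (∑ j, θ j) k.val * p k.val) :
    ∀ z : Fin J → ℕ,
      ∑' y : {y : Fin J → ℕ // ∀ j ∈ I, y j = z j}, P y.val
        = ((∏ j ∈ I, a (θ j) (z j)) / a (∑ j ∈ I, θ j) (∑ j ∈ I, z j)) * q (∑ j ∈ I, z j) := by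
  have hp : Summable p := not_imp_comm.1 tsum_eq_zero_of_not_summable (hp1 ▸ one_ne_zero)
  intro z
  convert (marginal_subvector_of_convolution_splitting_general ha_pos ha_add hθ hp hI hI' z).tsum_eq
  · exact hP _
  · simp only [convolutionSplitting, convolutionDamage, hq, sum_add_sum_compl]
    ring
end

section
/- (Expectation of a Dirichlet multinomial splitting distribution.) Let J ≥ 1, let p be a pmf on ℕ with finite mean μ₁ = ∑_n n·p(n) < ∞, let α ∈ (0,∞)^J, and let P be the Dirichlet multinomial splitting distribution P(y) = p(|y|)·(|y|!/(|α|)_{|y|})·∏_j (α_j)_{y_j}/y_j! on ℕ^J. Then for every j ∈ {1,…,J}: ∑_{y ∈ ℕ^J} y_j·P(y) = μ₁·α_j/|α|. -/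
/-- The Pochhammer symbol `(x)ₖ = x(x+1)⋯(x+k−1)`. -/
noncomputable def poch (x : ℝ) (k : ℕ) : ℝ := ∏ i ∈ Finset.range k, (x + i)

/-!
Write `W y = ∏ᵢ (αᵢ)_{yᵢ}/yᵢ!`, and let `S n` and `E n` be the sums of `W y` and of `yⱼ W y` over
`|y| = n`. Raising the `j`-th coordinate by one gives `(yⱼ + 1) W (y + eⱼ) = (αⱼ + yⱼ) W y`, hence
`E (n + 1) = αⱼ S n + E n`. Summing this over `j` yields `(n + 1) S (n + 1) = (|α| + n) S n`, so
that `S n = (|α|)ₙ/n!`, and induction on `n` then yields `|α| E n = n αⱼ S n`. Thus `yⱼ` has mean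
`n αⱼ/|α|` given `|y| = n`, and it remains to sum over `n`.
-/

open Finset

lemma poch_succ (x : ℝ) (k : ℕ) : poch x (k + 1) = poch x k * (x + k) :=
  prod_range_succ _ k

lemma poch_nonneg {x : ℝ} (hx : 0 ≤ x) (k : ℕ) : 0 ≤ poch x k :=
  prod_nonneg fun i _ => by positivity

lemma poch_pos {x : ℝ} (hx : 0 < x) (k : ℕ) : 0 < poch x k :=
  prod_pos fun i _ => by positivity

lemma hasSum_of_hasSum_sum_fiber {β γ E : Type*} [NormedAddCommGroup E] [CompleteSpace E]
    {f : β → E} {a : E} (g : β → γ) (s : γ → Finset β) (hs : ∀ b c, b ∈ s c ↔ g b = c)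
    (hf : Summable fun c => ∑ b ∈ s c, ‖f b‖) (ha : HasSum (fun c => ∑ b ∈ s c, f b) a) :
    HasSum f a := by
  let e : (Σ c, s c) ≃ β :=
    (Equiv.sigmaCongrRight fun c => Equiv.subtypeEquivRight fun b => hs b c).trans
      (Equiv.sigmaFiberEquiv g)
  have hsummable : Summable (f ∘ e) := by
    refine .of_norm ((summable_sigma_of_nonneg fun _ => norm_nonneg _).2
      ⟨fun c => (hasSum_fintype _).summable, hf.congr fun c => ?_⟩)
    exact ((s c).tsum_subtype fun b => ‖f b‖).symm
  exact e.hasSum_iff.1 (ha.sigma_of_hasSum (fun c => (s c).hasSum f) hsummable)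

section

variable {ι : Type*} [DecidableEq ι]

lemma sum_piAntidiag_succ_of_eq_zero {M : Type*} [AddCommMonoid M] {s : Finset ι} {j : ι}
    (hj : j ∈ s) (f : (ι → ℕ) → M) (hf : ∀ y, y j = 0 → f y = 0) (n : ℕ) :
    ∑ y ∈ piAntidiag s (n + 1), f y = ∑ y ∈ piAntidiag s n, f (y + Pi.single j 1) := by
  have mem_succ (y : ι → ℕ) :
      y + Pi.single j 1 ∈ piAntidiag s (n + 1) ↔ y ∈ piAntidiag s n := by
    have support_iff (i : ι) :
        ((y + Pi.single j 1 : ι → ℕ) i ≠ 0 → i ∈ s) ↔ (y i ≠ 0 → i ∈ s) := by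
      rcases eq_or_ne i j with rfl | hij <;> simp [*]
    simp only [mem_piAntidiag, support_iff]
    simp [sum_add_distrib, hj]
  refine (sum_of_injOn (· + Pi.single j 1) (add_left_injective _).injOn
    (fun y hy => (mem_succ y).2 hy) (fun y hy hnot => hf y ?_) fun _ _ => rfl).symm
  by_contra hyj
  have single_le : Pi.single j 1 ≤ y :=
    update_le_iff.2 ⟨Nat.one_le_iff_ne_zero.2 hyj, fun i _ => Nat.zero_le (y i)⟩
  have sub_add : y - Pi.single j 1 + Pi.single j 1 = y := tsub_add_cancel_of_le single_le
  exact hnot ⟨y - Pi.single j 1, (mem_succ _).1 (sub_add.symm ▸ hy), sub_add⟩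

lemma sum_sum_piAntidiag_mul {R : Type*} [Semiring R] (s : Finset ι) (w : (ι → ℕ) → R) (n : ℕ) :
    ∑ j ∈ s, ∑ y ∈ piAntidiag s n, (y j : R) * w y = n * ∑ y ∈ piAntidiag s n, w y := by
  rw [sum_comm, mul_sum]
  refine sum_congr rfl fun y hy => ?_
  rw [← sum_mul, ← (mem_piAntidiag.1 hy).1, Nat.cast_sum]

end

section

variable {ι : Type*} [Fintype ι]

/-- The weight `∏ᵢ (αᵢ)_{yᵢ}/yᵢ!`, proportional to the Dirichlet multinomial pmf with parameter `α`
on the vectors `y` of a given total. -/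
noncomputable def dirichletMultinomialWeight (α : ι → ℝ) (y : ι → ℕ) : ℝ :=
  ∏ i, poch (α i) (y i) / (Nat.factorial (y i) : ℝ)

/-- The Dirichlet multinomial splitting distribution: the total `|y|` has law `p` and is split among
the coordinates by a Dirichlet multinomial of parameter `α`. Here `p` may be any real sequence. -/
noncomputable def dirichletMultinomialSplitting (p : ℕ → ℝ) (α : ι → ℝ) (y : ι → ℕ) : ℝ :=
  p (∑ i, y i) * ((Nat.factorial (∑ i, y i) : ℝ) / poch (∑ i, α i) (∑ i, y i))
    * dirichletMultinomialWeight α y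

lemma dirichletMultinomialWeight_nonneg {α : ι → ℝ} (hα : ∀ i, 0 ≤ α i) (y : ι → ℕ) :
    0 ≤ dirichletMultinomialWeight α y :=
  prod_nonneg fun i _ => div_nonneg (poch_nonneg (hα i) _) (Nat.cast_nonneg _)

lemma abs_dirichletMultinomialSplitting (p : ℕ → ℝ) {α : ι → ℝ} (hα : ∀ i, 0 ≤ α i)
    (y : ι → ℕ) :
    |dirichletMultinomialSplitting p α y| =
      dirichletMultinomialSplitting (fun n => |p n|) α y := by
  have hpoch : 0 ≤ poch (∑ i, α i) (∑ i, y i) := poch_nonneg (sum_nonneg fun i _ => hα i) _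
  simp only [dirichletMultinomialSplitting, abs_mul, abs_div, Nat.abs_cast, abs_of_nonneg hpoch,
    abs_of_nonneg (dirichletMultinomialWeight_nonneg hα y)]

variable [DecidableEq ι]

lemma succ_mul_dirichletMultinomialWeight_add_single (α : ι → ℝ) (y : ι → ℕ) (j : ι) :
    (y j + 1) * dirichletMultinomialWeight α (y + Pi.single j 1) =
      (α j + y j) * dirichletMultinomialWeight α y := by
  have other_factors : ∀ i ∈ univ.erase j,
      poch (α i) ((y + Pi.single j 1 : ι → ℕ) i) /
          (Nat.factorial ((y + Pi.single j 1 : ι → ℕ) i) : ℝ) =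
        poch (α i) (y i) / (Nat.factorial (y i) : ℝ) := by
    intro i hi
    simp [ne_of_mem_erase hi]
  simp only [dirichletMultinomialWeight]
  rw [← mul_prod_erase univ _ (mem_univ j), prod_congr rfl other_factors,
    ← mul_prod_erase univ _ (mem_univ j), Pi.add_apply, Pi.single_eq_same, poch_succ,
    Nat.factorial_succ]
  push_cast
  field_simp

lemma sum_piAntidiag_succ_mul_dirichletMultinomialWeight (α : ι → ℝ) (j : ι) (n : ℕ) :
    ∑ y ∈ piAntidiag univ (n + 1), (y j : ℝ) * dirichletMultinomialWeight α y =
      α j * ∑ y ∈ piAntidiag univ n, dirichletMultinomialWeight α y +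
        ∑ y ∈ piAntidiag univ n, (y j : ℝ) * dirichletMultinomialWeight α y := by
  rw [sum_piAntidiag_succ_of_eq_zero (mem_univ j) _ (fun y hy => by simp [hy]), mul_sum,
    ← sum_add_distrib]
  refine sum_congr rfl fun y _ => ?_
  rw [Pi.add_apply, Pi.single_eq_same, Nat.cast_add_one,
    succ_mul_dirichletMultinomialWeight_add_single, add_mul]

lemma succ_mul_sum_piAntidiag_succ_dirichletMultinomialWeight (α : ι → ℝ) (n : ℕ) :
    (n + 1) * ∑ y ∈ piAntidiag univ (n + 1), dirichletMultinomialWeight α y =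
      (∑ i, α i + n) * ∑ y ∈ piAntidiag univ n, dirichletMultinomialWeight α y := by
  have total := sum_sum_piAntidiag_mul univ (dirichletMultinomialWeight α) (n + 1)
  rw [Nat.cast_add_one] at total
  simp only [← total, sum_piAntidiag_succ_mul_dirichletMultinomialWeight, sum_add_distrib,
    sum_sum_piAntidiag_mul, ← sum_mul, add_mul]

lemma sum_piAntidiag_dirichletMultinomialWeight (α : ι → ℝ) (n : ℕ) :
    ∑ y ∈ piAntidiag univ n, dirichletMultinomialWeight α y =
      poch (∑ i, α i) n / (Nat.factorial n : ℝ) := by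
  induction n with
  | zero => simp [dirichletMultinomialWeight, poch]
  | succ n ih =>
    have hn : (n + 1 : ℝ) ≠ 0 := n.cast_add_one_ne_zero
    apply mul_left_cancel₀ hn
    rw [succ_mul_sum_piAntidiag_succ_dirichletMultinomialWeight, ih, poch_succ,
      Nat.factorial_succ]
    push_cast
    field_simp

lemma sum_mul_sum_piAntidiag_mul_dirichletMultinomialWeight (α : ι → ℝ) (j : ι) (n : ℕ) :
    (∑ i, α i) * ∑ y ∈ piAntidiag univ n, (y j : ℝ) * dirichletMultinomialWeight α y =
      n * α j * ∑ y ∈ piAntidiag univ n, dirichletMultinomialWeight α y := by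
  induction n with
  | zero => simp
  | succ n ih =>
    rw [sum_piAntidiag_succ_mul_dirichletMultinomialWeight, mul_add, ih]
    push_cast
    linear_combination -α j * succ_mul_sum_piAntidiag_succ_dirichletMultinomialWeight α n

lemma sum_piAntidiag_mul_dirichletMultinomialSplitting (p : ℕ → ℝ) {α : ι → ℝ}
    (hα : 0 < ∑ i, α i) (j : ι) (n : ℕ) :
    ∑ y ∈ piAntidiag univ n, (y j : ℝ) * dirichletMultinomialSplitting p α y =
      n * p n * (α j / ∑ i, α i) := by
  have factor_out : ∀ y ∈ piAntidiag univ n,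
      (y j : ℝ) * dirichletMultinomialSplitting p α y =
        p n * ((Nat.factorial n : ℝ) / poch (∑ i, α i) n) *
          (y j * dirichletMultinomialWeight α y) := by
    intro y hy
    rw [dirichletMultinomialSplitting, (mem_piAntidiag.1 hy).1]
    ring
  have weighted_mean :=
    eq_div_of_mul_eq hα.ne' ((mul_comm _ _).trans
      (sum_mul_sum_piAntidiag_mul_dirichletMultinomialWeight α j n))
  have hpoch := (poch_pos hα n).ne'
  rw [sum_congr rfl factor_out, ← mul_sum, weighted_mean,
    sum_piAntidiag_dirichletMultinomialWeight]
  field_simp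

end

theorem expectation_dirichlet_multinomial_splitting_general {ι : Type*} [Fintype ι]
    {p : ℕ → ℝ} (hmean : Summable fun n : ℕ => (n : ℝ) * p n)
    {α : ι → ℝ} (hα : ∀ i, 0 ≤ α i) (hαsum : 0 < ∑ i, α i) (j : ι) :
    HasSum (fun y : ι → ℕ => (y j : ℝ) * dirichletMultinomialSplitting p α y)
      ((∑' n : ℕ, (n : ℝ) * p n) * α j / ∑ i, α i) := by
  classical
  refine hasSum_of_hasSum_sum_fiber (fun y => ∑ i, y i) (piAntidiag univ) (by simp) ?_ ?_
  · have norm_term (y : ι → ℕ) : ‖(y j : ℝ) * dirichletMultinomialSplitting p α y‖ =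
        y j * dirichletMultinomialSplitting (fun n => |p n|) α y := by
      rw [norm_mul, Real.norm_natCast, Real.norm_eq_abs, abs_dirichletMultinomialSplitting p hα]
    simp only [norm_term, sum_piAntidiag_mul_dirichletMultinomialSplitting _ hαsum]
    exact (hmean.abs.congr fun n => by rw [abs_mul, Nat.abs_cast]).mul_right _
  · simp only [sum_piAntidiag_mul_dirichletMultinomialSplitting p hαsum]
    rw [mul_div_assoc]
    exact hmean.hasSum.mul_right _

/-- expectation of a Dirichlet multinomial splitting distribution. If `p` is a
pmf on `ℕ` with finite mean `μ₁ = ∑ n·p n`, and `P` is the Dirichlet multinomial splitting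
distribution `P y = p |y| * (|y|!/(|α|)_{|y|}) * ∏ⱼ (αⱼ)_{yⱼ}/yⱼ!` on `ℕ^J`, then for every
`j`, `∑_y yⱼ·P y = μ₁·αⱼ/|α|`. -/
theorem expectation_dirichlet_multinomial_splitting
    (J : ℕ) (hJ : 1 ≤ J)
    (p : ℕ → ℝ) (hp0 : ∀ n, 0 ≤ p n) (hp1 : ∑' n : ℕ, p n = 1)
    (hmean : Summable (fun n : ℕ => (n : ℝ) * p n))
    (α : Fin J → ℝ) (hα : ∀ j, 0 < α j)
    (P : (Fin J → ℕ) → ℝ)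
    (hP : ∀ y : Fin J → ℕ,
      P y = p (∑ j, y j)
        * ((Nat.factorial (∑ j, y j) : ℝ) / poch (∑ j, α j) (∑ j, y j))
        * ∏ j, poch (α j) (y j) / (Nat.factorial (y j) : ℝ)) :
    ∀ j : Fin J,
      ∑' y : Fin J → ℕ, (y j : ℝ) * P y
        = (∑' n : ℕ, (n : ℝ) * p n) * α j / (∑ j, α j) := by
  intro j
  obtain rfl : P = dirichletMultinomialSplitting p α := funext hP
  exact (expectation_dirichlet_multinomial_splitting_general hmean (fun i => (hα i).le)
    (sum_pos (fun i _ => hα i) ⟨j, mem_univ j⟩) j).tsum_eq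
end
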